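/- Let A be a unital C*-algebra, let X and u be selfadjoint elements of A, let v ∈ A be strictly positive, and let ε ∈ A be selfadjoint. Then the element E = (X − u)(v + iε)⁻¹(X − u) + v + iε satisfies Re E ≥ v; in particular E is invertible and ‖E⁻¹‖ ≤ ‖v⁻¹‖. -/

import Mathlib

noncomputable section

open Filter Topology
open scoped ComplexOrder

/-- The real part `(b + b*)/2` of an element of a complex star algebra. -/
def reP {A : Type*} [NonUnitalRing A] [StarRing A] [Module ℂ A] (b : A) : A :=
  (2 : ℂ)⁻¹ • (b + star b)

/-- The imaginary part `(b - b*)/(2i)` of an element of a complex star algebra. -/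
def imP {A : Type*} [NonUnitalRing A] [StarRing A] [Module ℂ A] (b : A) : A :=
  (2 * Complex.I)⁻¹ • (b - star b)

/-- An element of a C*-algebra is strictly positive if it is selfadjoint, positive
(with respect to the canonical order coming from the star-ordered ring structure)
and invertible. -/
def SPos {A : Type*} [Ring A] [StarRing A] [PartialOrder A] (v : A) : Prop :=
  IsSelfAdjoint v ∧ 0 ≤ v ∧ IsUnit v

lemma aux_lower {A : Type*} [CStarAlgebra A] [PartialOrder A] [StarOrderedRing A]
    (b : A) (c : ℝ) (hc : 0 < c) (h : algebraMap ℝ A (2 * c) ≤ b + star b) :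
    algebraMap ℝ A (c ^ 2) ≤ star b * b := by
  have h1 : 0 ≤ star (b - algebraMap ℝ A c) * (b - algebraMap ℝ A c) := star_mul_self_nonneg _
  have h2 : star (b - algebraMap ℝ A c) * (b - algebraMap ℝ A c)
      = star b * b - c • (b + star b) + algebraMap ℝ A (c ^ 2) := by
    have : star (algebraMap ℝ A c) = algebraMap ℝ A c := by
      rw [← algebraMap_star_comm]; simp
    rw [star_sub, this, sub_mul, mul_sub, mul_sub, ← Algebra.commutes c (star b),
      ← Algebra.smul_def, ← Algebra.smul_def, ← Algebra.smul_def, pow_two, map_mul,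
      ← Algebra.smul_def, smul_add]
    abel
  have h3 : c • algebraMap ℝ A (2 * c) ≤ c • (b + star b) := smul_le_smul_of_nonneg_left h hc.le
  have h4 : c • algebraMap ℝ A (2 * c) = algebraMap ℝ A (c ^ 2) + algebraMap ℝ A (c ^ 2) := by
    rw [Algebra.smul_def, ← map_mul, ← map_add]; congr 1; ring
  rw [h2] at h1
  rw [h4] at h3
  have h5 := add_le_add h1 h3
  rw [← sub_nonneg] at h5 ⊢
  convert h5 using 1
  abel

lemma aux_main {A : Type*} [CStarAlgebra A] [PartialOrder A] [StarOrderedRing A]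
    (b : A) (c : ℝ) (hc : 0 < c) (h : algebraMap ℝ A (2 * c) ≤ b + star b) :
    IsUnit b ∧ ‖Ring.inverse b‖ ≤ c⁻¹ := by
  have hl := aux_lower b c hc h
  have hr := aux_lower (star b) c hc (by rwa [star_star, add_comm])
  rw [star_star] at hr
  have hp : IsStrictlyPositive (algebraMap ℝ A (c ^ 2)) := by
    refine ⟨algebraMap_nonneg A (by positivity), ?_⟩
    exact (IsUnit.mk0 (c ^ 2) (by positivity)).map (algebraMap ℝ A)
  obtain ⟨p, hp1⟩ := CStarAlgebra.isUnit_of_le _ hl hp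
  obtain ⟨q, hq1⟩ := CStarAlgebra.isUnit_of_le _ hr hp
  have hb : IsUnit b := by
    refine isUnit_iff_exists_and_exists.2 ⟨⟨star b * ↑q⁻¹, ?_⟩, ⟨↑p⁻¹ * star b, ?_⟩⟩
    · rw [← mul_assoc, ← hq1]; simp
    · rw [mul_assoc, ← hp1]; simp
  refine ⟨hb, ?_⟩
  obtain ⟨B, rfl⟩ := hb
  rw [Ring.inverse_unit]
  have h1 := star_left_conjugate_le_conjugate hl (↑B⁻¹ : A)
  have h2 : star (↑B⁻¹ : A) * (star (B : A) * B) * (↑B⁻¹ : A) = 1 := by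
    rw [mul_assoc, mul_assoc, B.mul_inv, mul_one, ← star_mul, B.mul_inv, star_one]
  have h3 : star (↑B⁻¹ : A) * algebraMap ℝ A (c ^ 2) * (↑B⁻¹ : A)
      = star (c • (↑B⁻¹ : A)) * (c • (↑B⁻¹ : A)) := by
    rw [← Algebra.commutes, ← Algebra.smul_def, star_smul, smul_mul_smul_comm, smul_mul_assoc]
    simp [pow_two]
  rw [h2, h3] at h1
  have h4 := (CStarAlgebra.norm_le_one_iff_of_nonneg _ (star_mul_self_nonneg _)).2 h1
  rw [CStarRing.norm_star_mul_self, norm_smul, Real.norm_of_nonneg hc.le] at h4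
  have h5 : c * ‖(↑B⁻¹ : A)‖ ≤ 1 := by nlinarith [mul_nonneg hc.le (norm_nonneg (↑B⁻¹ : A))]
  rw [← one_div c, le_div_iff₀ hc]
  linarith

lemma aux_v {A : Type*} [CStarAlgebra A] [PartialOrder A] [StarOrderedRing A] [Nontrivial A]
    (v : A) (hv : SPos v) :
    0 < ‖Ring.inverse v‖ ∧ algebraMap ℝ A (‖Ring.inverse v‖⁻¹) ≤ v := by
  obtain ⟨hs, h0, ⟨V, rfl⟩⟩ := hv
  rw [Ring.inverse_unit]
  have hn : 0 < ‖(↑V⁻¹ : A)‖ := norm_pos_iff.2 V⁻¹.ne_zero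
  refine ⟨hn, ?_⟩
  have hV : 0 ≤ (↑V⁻¹ : A) := CFC.inv_nonneg_of_nonneg V h0
  have h1 : (↑V⁻¹ : A) ≤ algebraMap ℝ A ‖(↑V⁻¹ : A)‖ :=
    (IsSelfAdjoint.of_nonneg hV).le_algebraMap_norm_self
  exact (CStarAlgebra.inv_le_iff (a := V)
    (b := Units.map (algebraMap ℝ A).toMonoidHom (Units.mk0 _ hn.ne')) h0
      (algebraMap_nonneg A hn.le)).1 h1

lemma aux_v2 {A : Type*} [CStarAlgebra A] [PartialOrder A] [StarOrderedRing A]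
    (v b : A) (hv : SPos v) (h : v + v ≤ b + star b) :
    IsUnit b ∧ ‖Ring.inverse b‖ ≤ ‖Ring.inverse v‖ := by
  rcases subsingleton_or_nontrivial A with hA | hA
  · exact ⟨isUnit_of_subsingleton b, by rw [Subsingleton.elim (Ring.inverse b) (Ring.inverse v)]⟩
  obtain ⟨h1, h2⟩ := aux_v v hv
  have := aux_main b _ (inv_pos.2 h1) (by
    rw [two_mul, map_add]
    exact (add_le_add h2 h2).trans h)
  rwa [inv_inv] at this

/-- for `X, u` selfadjoint, `v` strictly positive and `ε` selfadjoint, the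
element `E = (X − u)(v + iε)⁻¹(X − u) + v + iε` has real part `≥ v`; in particular `v + iε`
and `E` are invertible and `‖E⁻¹‖ ≤ ‖v⁻¹‖`. -/
theorem real_part_bound
    {A : Type*} [CStarAlgebra A] [PartialOrder A] [StarOrderedRing A]
    (X u v ε : A) (hX : IsSelfAdjoint X) (hu : IsSelfAdjoint u)
    (hv : SPos v) (hε : IsSelfAdjoint ε) :
    IsUnit (v + Complex.I • ε) ∧
    v ≤ reP ((X - u) * Ring.inverse (v + Complex.I • ε) * (X - u) + v + Complex.I • ε) ∧
    IsUnit ((X - u) * Ring.inverse (v + Complex.I • ε) * (X - u) + v + Complex.I • ε) ∧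
    ‖Ring.inverse ((X - u) * Ring.inverse (v + Complex.I • ε) * (X - u) + v + Complex.I • ε)‖
      ≤ ‖Ring.inverse v‖ := by
  have hb2 : (v + Complex.I • ε) + star (v + Complex.I • ε) = v + v := by
    rw [star_add, star_smul, hv.1.star_eq, hε.star_eq]
    simp only [Complex.star_def, Complex.conj_I, neg_smul]
    abel
  have hb := (aux_v2 v _ hv hb2.ge).1
  have hb' := hb
  obtain ⟨B, hB⟩ := hb'
  have hw : 0 ≤ Ring.inverse (v + Complex.I • ε) + star (Ring.inverse (v + Complex.I • ε)) := by
    rw [← hB] at hb2 ⊢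
    rw [Ring.inverse_unit]
    have h1 : 0 ≤ star (↑B⁻¹ : A) * (v + v) * (↑B⁻¹ : A) :=
      star_left_conjugate_nonneg (add_nonneg hv.2.1 hv.2.1) _
    rw [← hb2, mul_add, add_mul, mul_assoc, B.mul_inv, mul_one, ← star_mul, B.mul_inv, star_one,
      one_mul, add_comm] at h1
    exact h1
  have hY : IsSelfAdjoint (X - u) := hX.sub hu
  generalize X - u = Y at *
  generalize Ring.inverse (v + Complex.I • ε) = w at *
  have hE : v + v ≤ (Y * w * Y + v + Complex.I • ε) + star (Y * w * Y + v + Complex.I • ε) := by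
    have h1 : 0 ≤ star Y * (w + star w) * Y := star_left_conjugate_nonneg hw _
    have h2 : (Y * w * Y + v + Complex.I • ε) + star (Y * w * Y + v + Complex.I • ε)
        = star Y * (w + star w) * Y + (v + v) := by
      rw [← hb2, add_assoc (Y * w * Y), star_add (Y * w * Y), star_mul, star_mul, hY.star_eq,
        mul_add, add_mul, mul_assoc Y (star w)]
      abel
    rw [h2]
    exact le_add_of_nonneg_left h1
  refine ⟨hb, ?_, aux_v2 v _ hv hE⟩
  have h3 := smul_le_smul_of_nonneg_left hE (a := (2⁻¹ : ℝ)) (by norm_num)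
  have h4 : ∀ x : A, (2⁻¹ : ℝ) • x = (2⁻¹ : ℂ) • x := fun x => by
    rw [← Complex.coe_smul]; simp
  have h5 : (2⁻¹ : ℝ) • (v + v) = v := by
    rw [← two_smul ℝ v, smul_smul]; norm_num
  rw [h5, h4] at h3
  exact h3
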